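/- For every N ≥ 1 and every z ∈ ℂ with Im z ≠ 0, one has E((Tr G(z,M))²) = N · E(Tr(G(z,M) · V'_t(M))). -/

import Mathlib

open MeasureTheory Filter Finset

noncomputable section

namespace LoopEq

/-- The external field `V_t(x) = x^2/2 + ∑_{j=1}^v t_j x^j`. -/
def Vt (v : ℕ) (t : ℕ → ℝ) (x : ℝ) : ℝ :=
  x ^ 2 / 2 + ∑ j ∈ Finset.Icc 1 v, t j * x ^ j

/-- The derivative `V_t'(x) = x + ∑_{j=1}^v j t_j x^(j-1)`. -/
def Vt' (v : ℕ) (t : ℕ → ℝ) (x : ℝ) : ℝ :=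
  x + ∑ j ∈ Finset.Icc 1 v, (j : ℝ) * t j * x ^ (j - 1)

/-- The complex extension of `V_t'`. -/
def Vt'C (v : ℕ) (t : ℕ → ℝ) (z : ℂ) : ℂ :=
  z + ∑ j ∈ Finset.Icc 1 v, (j : ℂ) * (t j : ℂ) * z ^ (j - 1)

/-- The parameter domain `𝕋(T,γ)`. -/
def Tdom (v : ℕ) (T γ : ℝ) : Set (ℕ → ℝ) :=
  {t | Real.sqrt (∑ j ∈ Finset.Icc 1 v, t j ^ 2) ≤ T ∧
    γ * ∑ j ∈ Finset.Icc 1 (v - 1), |t j| < t v}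

/-- The (unnormalized) joint eigenvalue density
`∏_{j<ℓ} (λ_j - λ_ℓ)^2 exp(-N ∑_j V_t(λ_j))`. -/
def dens (v N : ℕ) (t : ℕ → ℝ) (x : Fin N → ℝ) : ℝ :=
  (∏ p ∈ Finset.univ.filter (fun p : Fin N × Fin N => p.1 < p.2), (x p.1 - x p.2) ^ 2) *
    Real.exp (-(N : ℝ) * ∑ i, Vt v t (x i))

/-- The eigenvalue partition function `Z_N(t)`. -/
def Z (v N : ℕ) (t : ℕ → ℝ) : ℝ :=
  ∫ x : Fin N → ℝ, dens v N t x

/-- Expectation of an eigenvalue statistic with respect to `P_{N,t}`. -/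
def Ee (v N : ℕ) (t : ℕ → ℝ) (f : (Fin N → ℝ) → ℝ) : ℝ :=
  (∫ x : Fin N → ℝ, f x * dens v N t x) / Z v N t

/-- The weighted logarithmic energy `∫ V_t dμ - ∫∫ log |λ-η| dμ dμ`. -/
def energy (v : ℕ) (t : ℕ → ℝ) (μ : Measure ℝ) : ℝ :=
  (∫ x, Vt v t x ∂μ) - ∫ x, (∫ y, Real.log |x - y| ∂μ) ∂μ

/-- `μ` is the equilibrium measure: a Borel probability measure minimizing the
weighted logarithmic energy. -/
def IsEqMeasure (v : ℕ) (t : ℕ → ℝ) (μ : Measure ℝ) : Prop :=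
  IsProbabilityMeasure μ ∧
    ∀ ν : Measure ℝ, IsProbabilityMeasure ν → energy v t μ ≤ energy v t ν

/-- The equilibrium density `(1/2π) χ_(α,β)(x) √((x-α)(β-x)) h(x)`. -/
def eqDensity (α β : ℝ) (h : Polynomial ℝ) (x : ℝ) : ℝ :=
  Set.indicator (Set.Ioo α β)
    (fun y => (2 * Real.pi)⁻¹ * Real.sqrt ((y - α) * (β - y)) * h.eval y) x

/-- The support of a measure on ℝ: points all of whose neighborhoods have
positive measure. -/
def msupport (μ : Measure ℝ) : Set ℝ :=
  {x | ∀ U ∈ nhds x, 0 < μ U}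

/-- `ρ` is the one-point function: the density of the expected empirical
measure of eigenvalues. -/
def IsOnePoint (v N : ℕ) (t : ℕ → ℝ) (ρ : ℝ → ℝ) : Prop :=
  ∀ A : Set ℝ, MeasurableSet A →
    ∫ x in A, ρ x = Ee v N t (fun x => (∑ j, Set.indicator A 1 (x j)) / N)

/-- Embedding of `v` real parameters `(t_1, …, t_v)` as a parameter function. -/
def pad (v : ℕ) (s : Fin v → ℝ) : ℕ → ℝ := fun j =>
  if h : 1 ≤ j ∧ j - 1 < v then s ⟨j - 1, h.2⟩ else 0

/-! Hermitian matrix model -/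

/-- Real coordinates for an `N × N` Hermitian matrix: the diagonal entries and
the real and imaginary parts of the above-diagonal entries. -/
abbrev coords (N : ℕ) :=
  (Fin N → ℝ) × ({p : Fin N × Fin N // p.1 < p.2} → ℝ × ℝ)

/-- The Hermitian matrix with the given real coordinates. -/
def herm (N : ℕ) (e : coords N) : Matrix (Fin N) (Fin N) ℂ := fun i j =>
  if hij : i < j then ⟨(e.2 ⟨(i, j), hij⟩).1, (e.2 ⟨(i, j), hij⟩).2⟩
  else if hji : j < i then ⟨(e.2 ⟨(j, i), hji⟩).1, -(e.2 ⟨(j, i), hji⟩).2⟩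
  else ((e.1 i : ℝ) : ℂ)

/-- The matrix external field `V_t(M) = M^2/2 + ∑_{j=1}^v t_j M^j`. -/
def VtM (v N : ℕ) (t : ℕ → ℝ) (M : Matrix (Fin N) (Fin N) ℂ) :
    Matrix (Fin N) (Fin N) ℂ :=
  (2⁻¹ : ℂ) • M ^ 2 + ∑ j ∈ Finset.Icc 1 v, ((t j : ℂ)) • M ^ j

/-- `V_t'(M) = M + ∑_{j=1}^v j t_j M^(j-1)`. -/
def Vt'M (v N : ℕ) (t : ℕ → ℝ) (M : Matrix (Fin N) (Fin N) ℂ) :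
    Matrix (Fin N) (Fin N) ℂ :=
  M + ∑ j ∈ Finset.Icc 1 v, ((j : ℂ) * (t j : ℂ)) • M ^ (j - 1)

/-- The unnormalized density `exp(-N Tr V_t(M))` of the unitary ensemble
measure in the real coordinates of the Hermitian matrix `M`. -/
def wt (v N : ℕ) (t : ℕ → ℝ) (e : coords N) : ℝ :=
  Real.exp (-(N : ℝ) * (Matrix.trace (VtM v N t (herm N e))).re)

/-- The matrix-model partition function `Z̃_N`. -/
def Zmat (v N : ℕ) (t : ℕ → ℝ) : ℝ :=
  ∫ e : coords N, wt v N t e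

/-- Expectation `E` of a matrix statistic with respect to the unitary ensemble
measure `μ_t`. -/
def Em (v N : ℕ) (t : ℕ → ℝ) (f : coords N → ℂ) : ℂ :=
  (∫ e : coords N, f e * (wt v N t e : ℂ)) / (Zmat v N t : ℂ)

/-- The Green's function (resolvent) `G(z, M) = (z - M)⁻¹`. -/
def G (N : ℕ) (z : ℂ) (M : Matrix (Fin N) (Fin N) ℂ) : Matrix (Fin N) (Fin N) ℂ :=
  (z • (1 : Matrix (Fin N) (Fin N) ℂ) - M)⁻¹


section Aux

attribute [local instance] Matrix.linftyOpNormedRing Matrix.linftyOpNormedAlgebra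

/-! ### Elementary properties of `herm` -/

lemma herm_isHermitian (N : ℕ) (e : coords N) : (herm N e).IsHermitian := by
  ext i j
  rw [Matrix.conjTranspose_apply]
  rcases lt_trichotomy i j with h | h | h
  · apply Complex.ext <;> simp [herm, h, h.not_gt]
  · subst h
    simp [herm]
  · apply Complex.ext <;> simp [herm, h, h.not_gt]

lemma herm_add_smul (N : ℕ) (e u : coords N) (s : ℝ) :
    herm N (e + s • u) = herm N e + s • herm N u := by
  ext i j
  rw [Matrix.add_apply, Matrix.smul_apply]
  rcases lt_trichotomy i j with h | h | h
  · apply Complex.ext <;> simp [herm, h]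
  · subst h
    apply Complex.ext <;> simp [herm]
  · apply Complex.ext <;> simp [herm, h, h.not_gt]; ring

lemma exists_herm (N : ℕ) (H : Matrix (Fin N) (Fin N) ℂ) (hH : H.IsHermitian) :
    ∃ u : coords N, herm N u = H := by
  refine ⟨(fun i => (H i i).re, fun p => ((H p.1.1 p.1.2).re, (H p.1.1 p.1.2).im)), ?_⟩
  ext i j
  rcases lt_trichotomy i j with h | h | h
  · apply Complex.ext <;> simp [herm, h]
  · subst h
    simpa [herm] using hH.coe_re_apply_self i
  · rw [← hH.apply i j]
    apply Complex.ext <;> simp [herm, h, h.not_gt]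

lemma herm_continuous (N : ℕ) : Continuous (herm N) := by
  refine continuous_matrix fun i j => ?_
  rcases lt_trichotomy i j with h | h | h
  · have : (fun e : coords N => herm N e i j) = fun e =>
      ((e.2 ⟨(i, j), h⟩).1 : ℂ) + ((e.2 ⟨(i, j), h⟩).2 : ℂ) * Complex.I := by
      funext e
      apply Complex.ext <;> simp [herm, h]
    rw [this]
    fun_prop
  · subst h
    have : (fun e : coords N => herm N e i i) = fun e => (e.1 i : ℂ) := by
      funext e
      simp [herm]
    rw [this]
    fun_prop
  · have : (fun e : coords N => herm N e i j) = fun e =>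
      ((e.2 ⟨(j, i), h⟩).1 : ℂ) - ((e.2 ⟨(j, i), h⟩).2 : ℂ) * Complex.I := by
      funext e
      apply Complex.ext <;> simp [herm, h, h.not_gt]
    rw [this]
    fun_prop

lemma herm_entry_le (N : ℕ) (e : coords N) (i j : Fin N) : ‖herm N e i j‖ ≤ 2 * ‖e‖ := by
  have h1 : ∀ i, |e.1 i| ≤ ‖e‖ := fun i => (norm_le_pi_norm e.1 i).trans (norm_fst_le e)
  have h2 : ∀ p, ‖e.2 p‖ ≤ ‖e‖ := fun p => (norm_le_pi_norm e.2 p).trans (norm_snd_le e)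
  have h3 : ∀ p, |(e.2 p).1| ≤ ‖e‖ := fun p => (norm_fst_le (e.2 p)).trans (h2 p)
  have h4 : ∀ p, |(e.2 p).2| ≤ ‖e‖ := fun p => (norm_snd_le (e.2 p)).trans (h2 p)
  refine (Complex.norm_le_abs_re_add_abs_im _).trans ?_
  rcases lt_trichotomy i j with h | h | h
  · have a := h3 ⟨(i, j), h⟩
    have b := h4 ⟨(i, j), h⟩
    simp [herm, h]
    linarith
  · subst h
    have a := h1 i
    have b := norm_nonneg e
    simp [herm]
    linarith
  · have a := h3 ⟨(j, i), h⟩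
    have b := h4 ⟨(j, i), h⟩
    simp [herm, h, h.not_gt]
    linarith

lemma trace_sq_re (N : ℕ) (M : Matrix (Fin N) (Fin N) ℂ) (hM : M.IsHermitian) :
    (Matrix.trace (M ^ 2)).re = ∑ i, ∑ j, ‖M i j‖ ^ 2 := by
  rw [pow_two, Matrix.trace, Complex.re_sum]
  refine Finset.sum_congr rfl fun i _ => ?_
  rw [Matrix.diag_apply, Matrix.mul_apply, Complex.re_sum]
  refine Finset.sum_congr rfl fun j _ => ?_
  rw [← hM.apply j i, Complex.sq_norm, Complex.normSq_apply]
  simp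

lemma norm_sq_le_trace (N : ℕ) (e : coords N) :
    ‖e‖ ^ 2 ≤ (Matrix.trace (herm N e ^ 2)).re := by
  rw [trace_sq_re N _ (herm_isHermitian N e)]
  set S := ∑ i, ∑ j, ‖herm N e i j‖ ^ 2
  have hS0 : 0 ≤ S := by positivity
  have hS : ∀ i j, ‖herm N e i j‖ ≤ Real.sqrt S := by
    intro i j
    apply Real.le_sqrt_of_sq_le
    refine le_trans ?_ (Finset.single_le_sum (f := fun i => ∑ j, ‖herm N e i j‖ ^ 2)
      (fun i _ => by positivity) (Finset.mem_univ i))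
    exact Finset.single_le_sum (f := fun j => ‖herm N e i j‖ ^ 2)
      (fun i _ => by positivity) (Finset.mem_univ j)
  have h : ‖e‖ ≤ Real.sqrt S := by
    refine norm_prod_le_iff.2 ⟨?_, ?_⟩
    · refine (pi_norm_le_iff_of_nonneg (Real.sqrt_nonneg _)).2 fun i => ?_
      have := hS i i
      simpa [herm] using this
    · refine (pi_norm_le_iff_of_nonneg (Real.sqrt_nonneg _)).2 fun p => ?_
      have := hS p.1.1 p.1.2
      refine norm_prod_le_iff.2 ⟨?_, ?_⟩
      · have h2 := (Complex.abs_re_le_norm _).trans this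
        simpa [herm, p.2] using h2
      · have h2 := (Complex.abs_im_le_norm _).trans this
        simpa [herm, p.2] using h2
  calc ‖e‖ ^ 2 ≤ Real.sqrt S ^ 2 := by gcongr
    _ = S := Real.sq_sqrt hS0

/-! ### Lower bound for the potential -/

lemma poly_small (t : ℕ → ℝ) (v : ℕ) (s : Finset ℕ) :
    (∀ j ∈ s, j < v) → ∀ ε : ℝ, 0 < ε → ∃ C : ℝ, ∀ x : ℝ,
      |∑ j ∈ s, t j * x ^ j| ≤ ε * |x| ^ v + C := by
  induction s using Finset.induction_on with
  | empty =>
    intro _ ε hε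
    exact ⟨0, fun x => by simp; positivity⟩
  | insert a s ha ih =>
    intro h ε hε
    obtain ⟨C, hC⟩ := ih (fun j hj => h j (Finset.mem_insert_of_mem hj)) (ε / 2) (by positivity)
    have hav : a < v := h a (Finset.mem_insert_self _ _)
    set R : ℝ := |t a| / (ε / 2) + 1 with hR
    have hR1 : 1 ≤ R := by
      have : 0 ≤ |t a| / (ε / 2) := by positivity
      linarith
    refine ⟨C + |t a| * R ^ a, fun x => ?_⟩
    rw [Finset.sum_insert ha]
    have key : |t a * x ^ a| ≤ ε / 2 * |x| ^ v + |t a| * R ^ a := by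
      rw [abs_mul, abs_pow]
      rcases le_total |x| R with hx | hx
      · have h1 : |t a| * |x| ^ a ≤ |t a| * R ^ a := by gcongr
        have h2 : 0 ≤ ε / 2 * |x| ^ v := by positivity
        linarith
      · have h1 : |t a| ≤ ε / 2 * |x| := by
          have : |t a| / (ε / 2) ≤ |x| := by linarith
          rw [div_le_iff₀ (by positivity)] at this
          linarith
        have h2 : |x| ^ (a + 1) ≤ |x| ^ v := pow_le_pow_right₀ (hR1.trans hx) hav
        have h3 : |t a| * |x| ^ a ≤ ε / 2 * |x| * |x| ^ a := by gcongr
        have h4 : ε / 2 * |x| ^ (a + 1) ≤ ε / 2 * |x| ^ v := by gcongr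
        have h5 : 0 ≤ |t a| * R ^ a := by positivity
        rw [pow_succ] at h4
        linarith
    have := abs_add_le (t a * x ^ a) (∑ j ∈ s, t j * x ^ j)
    have := hC x
    linarith

lemma Vt_lower (v : ℕ) (hv : 2 ≤ v) (hve : Even v) (t : ℕ → ℝ) (ht : 0 < t v) :
    ∃ C : ℝ, ∀ x : ℝ, x ^ 2 / 2 - C ≤ Vt v t x := by
  obtain ⟨C, hC⟩ := poly_small t v (Finset.Ico 1 v) (fun j hj => (Finset.mem_Ico.1 hj).2) (t v) ht
  refine ⟨C, fun x => ?_⟩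
  have h1 := (abs_le.1 (hC x)).1
  rw [hve.pow_abs] at h1
  have h2 : ∑ j ∈ Finset.Icc 1 v, t j * x ^ j =
      ∑ j ∈ Finset.Ico 1 v, t j * x ^ j + t v * x ^ v := by
    rw [← Finset.Ico_insert_right (by omega : 1 ≤ v), Finset.sum_insert (by simp)]
    ring
  rw [Vt, h2]
  linarith

lemma trace_pow_eq (N : ℕ) (M : Matrix (Fin N) (Fin N) ℂ) (hM : M.IsHermitian) (k : ℕ) :
    Matrix.trace (M ^ k) = ∑ i, ((hM.eigenvalues i : ℝ) : ℂ) ^ k := by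
  conv_lhs => rw [hM.spectral_theorem]
  rw [← map_pow, Unitary.conjStarAlgAut_apply, Matrix.trace_mul_cycle,
    Unitary.coe_star_mul_self, one_mul, Matrix.diagonal_pow, Matrix.trace_diagonal]
  simp

lemma trace_VtM_re (v N : ℕ) (t : ℕ → ℝ) (M : Matrix (Fin N) (Fin N) ℂ) (hM : M.IsHermitian) :
    (Matrix.trace (VtM v N t M)).re = ∑ i, Vt v t (hM.eigenvalues i) := by
  have : Matrix.trace (VtM v N t M) = ((∑ i, Vt v t (hM.eigenvalues i) : ℝ) : ℂ) := by
    simp only [VtM, Matrix.trace_add, Matrix.trace_sum, Matrix.trace_smul, trace_pow_eq N M hM, Vt,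
      smul_eq_mul]
    push_cast
    rw [Finset.sum_add_distrib, Finset.sum_comm (s := Finset.univ), Finset.mul_sum]
    simp only [Finset.mul_sum]
    congr 1
    refine Finset.sum_congr rfl fun i _ => by ring
  rw [this, Complex.ofReal_re]

lemma wt_le (v N : ℕ) (hv : 2 ≤ v) (hve : Even v) (t : ℕ → ℝ) (ht : 0 < t v) (hN : 1 ≤ N) :
    ∃ K : ℝ, 0 ≤ K ∧ ∀ e : coords N, wt v N t e ≤ K * Real.exp (-(‖e‖ ^ 2 / 2)) := by
  obtain ⟨C, hC⟩ := Vt_lower v hv hve t ht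
  refine ⟨Real.exp (N * (N * C)), (Real.exp_pos _).le, fun e => ?_⟩
  rw [wt, ← Real.exp_add]
  apply Real.exp_le_exp.2
  have hM := herm_isHermitian N e
  have h1 := norm_sq_le_trace N e
  have h2 : (Matrix.trace (herm N e ^ 2)).re = ∑ i, hM.eigenvalues i ^ 2 := by
    rw [trace_pow_eq N _ hM, Complex.re_sum]
    refine Finset.sum_congr rfl fun i _ => ?_
    norm_cast
  have h3 : ∑ i, (hM.eigenvalues i ^ 2 / 2 - C) ≤ ∑ i, Vt v t (hM.eigenvalues i) :=
    Finset.sum_le_sum fun i _ => hC _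
  rw [Finset.sum_sub_distrib, ← Finset.sum_div, ← h2] at h3
  simp only [Finset.sum_const, Finset.card_univ, Fintype.card_fin, nsmul_eq_mul] at h3
  rw [trace_VtM_re v N t _ hM]
  have hN' : (1 : ℝ) ≤ N := by exact_mod_cast hN
  have h4 : ‖e‖ ^ 2 / 2 - N * C ≤ ∑ i, Vt v t (hM.eigenvalues i) := by linarith
  have h5 : (N : ℝ) * (‖e‖ ^ 2 / 2 - N * C) ≤ N * ∑ i, Vt v t (hM.eigenvalues i) := by gcongr
  have h6 : ‖e‖ ^ 2 / 2 ≤ N * (‖e‖ ^ 2 / 2) := le_mul_of_one_le_left (by positivity) hN'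
  linarith

/-! ### Functions of polynomial growth -/

/-- Continuous functions of polynomial growth. -/
def Nice (N : ℕ) (f : coords N → ℂ) : Prop :=
  Continuous f ∧ ∃ (C : ℝ) (k : ℕ), 0 ≤ C ∧ ∀ e, ‖f e‖ ≤ C * (1 + ‖e‖) ^ k

lemma Nice.const (N : ℕ) (c : ℂ) : Nice N (fun _ => c) :=
  ⟨continuous_const, ‖c‖, 0, norm_nonneg _, fun e => by simp⟩

lemma Nice.add {N : ℕ} {f g : coords N → ℂ} (hf : Nice N f) (hg : Nice N g) :
    Nice N (fun e => f e + g e) := by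
  obtain ⟨hfc, C, k, hC, hf⟩ := hf
  obtain ⟨hgc, D, l, hD, hg⟩ := hg
  refine ⟨hfc.add hgc, C + D, k + l, by positivity, fun e => ?_⟩
  have h1 : (1 : ℝ) ≤ 1 + ‖e‖ := by linarith [norm_nonneg e]
  have h2 : (1 + ‖e‖) ^ k ≤ (1 + ‖e‖) ^ (k + l) := pow_le_pow_right₀ h1 (by omega)
  have h3 : (1 + ‖e‖) ^ l ≤ (1 + ‖e‖) ^ (k + l) := pow_le_pow_right₀ h1 (by omega)
  calc ‖f e + g e‖ ≤ ‖f e‖ + ‖g e‖ := norm_add_le _ _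
    _ ≤ C * (1 + ‖e‖) ^ k + D * (1 + ‖e‖) ^ l := add_le_add (hf e) (hg e)
    _ ≤ C * (1 + ‖e‖) ^ (k + l) + D * (1 + ‖e‖) ^ (k + l) := by gcongr
    _ = _ := by ring

lemma Nice.mul {N : ℕ} {f g : coords N → ℂ} (hf : Nice N f) (hg : Nice N g) :
    Nice N (fun e => f e * g e) := by
  obtain ⟨hfc, C, k, hC, hf⟩ := hf
  obtain ⟨hgc, D, l, hD, hg⟩ := hg
  refine ⟨hfc.mul hgc, C * D, k + l, by positivity, fun e => ?_⟩
  calc ‖f e * g e‖ = ‖f e‖ * ‖g e‖ := norm_mul _ _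
    _ ≤ (C * (1 + ‖e‖) ^ k) * (D * (1 + ‖e‖) ^ l) :=
      mul_le_mul (hf e) (hg e) (norm_nonneg _) (by positivity)
    _ = _ := by ring

lemma Nice.sum {N : ℕ} {ι : Type} (s : Finset ι) {f : ι → coords N → ℂ}
    (hf : ∀ i ∈ s, Nice N (f i)) : Nice N (fun e => ∑ i ∈ s, f i e) := by
  classical
  induction s using Finset.induction_on with
  | empty => simpa using Nice.const N 0
  | insert a s ha ih =>
    simp only [Finset.sum_insert ha]
    exact (hf a (Finset.mem_insert_self _ _)).add
      (ih fun i hi => hf i (Finset.mem_insert_of_mem hi))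

/-- Matrix-valued functions all of whose entries are of polynomial growth. -/
def NiceM (N : ℕ) (F : coords N → Matrix (Fin N) (Fin N) ℂ) : Prop :=
  ∀ i j, Nice N (fun e => F e i j)

lemma NiceM.const (N : ℕ) (A : Matrix (Fin N) (Fin N) ℂ) : NiceM N (fun _ => A) :=
  fun i j => Nice.const N (A i j)

lemma NiceM.add {N : ℕ} {F H : coords N → Matrix (Fin N) (Fin N) ℂ} (hF : NiceM N F)
    (hH : NiceM N H) : NiceM N (fun e => F e + H e) :=
  fun i j => (hF i j).add (hH i j)

lemma NiceM.mul {N : ℕ} {F H : coords N → Matrix (Fin N) (Fin N) ℂ} (hF : NiceM N F)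
    (hH : NiceM N H) : NiceM N (fun e => F e * H e) := by
  intro i j
  simp only [Matrix.mul_apply]
  exact Nice.sum _ fun k _ => (hF i k).mul (hH k j)

lemma NiceM.smul {N : ℕ} {F : coords N → Matrix (Fin N) (Fin N) ℂ} (c : ℂ) (hF : NiceM N F) :
    NiceM N (fun e => c • F e) :=
  fun i j => (Nice.const N c).mul (hF i j)

lemma NiceM.pow {N : ℕ} {F : coords N → Matrix (Fin N) (Fin N) ℂ} (hF : NiceM N F) (k : ℕ) :
    NiceM N (fun e => F e ^ k) := by
  induction k with
  | zero => simpa using NiceM.const N 1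
  | succ k ih =>
    simp only [pow_succ]
    exact ih.mul hF

lemma NiceM.sum {N : ℕ} {ι : Type} (s : Finset ι) {F : ι → coords N → Matrix (Fin N) (Fin N) ℂ}
    (hF : ∀ i ∈ s, NiceM N (F i)) : NiceM N (fun e => ∑ i ∈ s, F i e) := by
  intro i j
  simp only [Matrix.sum_apply]
  exact Nice.sum _ fun k hk => hF k hk i j

lemma NiceM.trace {N : ℕ} {F : coords N → Matrix (Fin N) (Fin N) ℂ} (hF : NiceM N F) :
    Nice N (fun e => Matrix.trace (F e)) :=
  Nice.sum _ fun i _ => hF i i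

lemma niceM_herm (N : ℕ) : NiceM N (herm N) := by
  intro i j
  refine ⟨(herm_continuous N).matrix_elem i j, 2, 1, by norm_num, fun e => ?_⟩
  have := herm_entry_le N e i j
  linarith

lemma niceM_Vt' (v N : ℕ) (t : ℕ → ℝ) : NiceM N (fun e => Vt'M v N t (herm N e)) := by
  unfold Vt'M
  exact (niceM_herm N).add (NiceM.sum _ fun j _ => ((niceM_herm N).pow _).smul _)

lemma niceM_Vt (v N : ℕ) (t : ℕ → ℝ) : NiceM N (fun e => VtM v N t (herm N e)) := by
  unfold VtM
  exact (((niceM_herm N).pow _).smul _).add (NiceM.sum _ fun j _ => ((niceM_herm N).pow _).smul _)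

lemma wt_continuous (v N : ℕ) (t : ℕ → ℝ) : Continuous (wt v N t) := by
  have h := (niceM_Vt v N t).trace.1
  unfold wt
  fun_prop

lemma exp_poly_bound (n : ℕ) (r : ℝ) (hr : 0 ≤ r) :
    (1 + r) ^ n * Real.exp (-(r ^ 2 / 2)) ≤ n.factorial * Real.exp (3 / 2) := by
  have h1 := Real.pow_div_factorial_le_exp (1 + r) (by linarith) n
  have hn : (0 : ℝ) < n.factorial := by exact_mod_cast n.factorial_pos
  rw [div_le_iff₀ hn] at h1
  calc (1 + r) ^ n * Real.exp (-(r ^ 2 / 2))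
      ≤ (Real.exp (1 + r) * n.factorial) * Real.exp (-(r ^ 2 / 2)) := by gcongr
    _ = n.factorial * Real.exp ((1 + r) + -(r ^ 2 / 2)) := by
      rw [Real.exp_add (1 + r) (-(r ^ 2 / 2))]
      ring
    _ ≤ _ := by
      gcongr
      nlinarith [sq_nonneg (r - 1)]

instance coords_haar (N : ℕ) : (volume : Measure (coords N)).IsAddHaarMeasure := by
  have h1 : (volume : Measure (ℝ × ℝ)).IsAddHaarMeasure :=
    inferInstanceAs ((volume : Measure ℝ).prod (volume : Measure ℝ)).IsAddHaarMeasure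
  have h2 : (volume : Measure ({p : Fin N × Fin N // p.1 < p.2} → ℝ × ℝ)).IsAddHaarMeasure :=
    inferInstanceAs (Measure.pi fun _ => (volume : Measure (ℝ × ℝ))).IsAddHaarMeasure
  have h3 : SFinite (volume : Measure ({p : Fin N × Fin N // p.1 < p.2} → ℝ × ℝ)) :=
    inferInstance
  have h4 : (volume : Measure (Fin N → ℝ)).IsAddHaarMeasure := inferInstance
  exact Measure.prod.instIsAddHaarMeasure (volume : Measure (Fin N → ℝ))
    (volume : Measure ({p : Fin N × Fin N // p.1 < p.2} → ℝ × ℝ))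

lemma Nice.integrable {v N : ℕ} (hv : 2 ≤ v) (hve : Even v) {t : ℕ → ℝ} (ht : 0 < t v)
    (hN : 1 ≤ N) {f : coords N → ℂ} (hf : Nice N f) :
    Integrable (fun e => f e * (wt v N t e : ℂ)) := by
  obtain ⟨hfc, C, k, hC, hf⟩ := hf
  obtain ⟨K, hK0, hK⟩ := wt_le v N hv hve t ht hN
  set m := Module.finrank ℝ (coords N) + 1 with hm
  have hint : Integrable (fun e : coords N => (1 + ‖e‖) ^ (-(m : ℝ))) :=
    integrable_one_add_norm (by rw [hm]; push_cast; linarith)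
  refine (hint.const_mul (C * K * ((k + m).factorial * Real.exp (3 / 2)))).mono'
    (hfc.mul (Complex.continuous_ofReal.comp (wt_continuous v N t))).aestronglyMeasurable
    (Eventually.of_forall fun e => ?_)
  have h0 : 0 ≤ wt v N t e := (Real.exp_pos _).le
  have hr := norm_nonneg e
  have h1 : (0 : ℝ) < 1 + ‖e‖ := by linarith
  rw [norm_mul, Complex.norm_real, Real.norm_of_nonneg h0, Real.rpow_neg h1.le, Real.rpow_natCast,
    ← div_eq_mul_inv, le_div_iff₀ (by positivity)]
  calc ‖f e‖ * wt v N t e * (1 + ‖e‖) ^ m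
      ≤ (C * (1 + ‖e‖) ^ k) * (K * Real.exp (-(‖e‖ ^ 2 / 2))) * (1 + ‖e‖) ^ m := by
        gcongr
        · exact hf e
        · exact hK e
    _ = C * K * ((1 + ‖e‖) ^ (k + m) * Real.exp (-(‖e‖ ^ 2 / 2))) := by ring
    _ ≤ C * K * ((k + m).factorial * Real.exp (3 / 2)) :=
      mul_le_mul_of_nonneg_left (exp_poly_bound _ _ hr) (by positivity)

/-! ### The resolvent -/

lemma isUnit_sub (N : ℕ) (z : ℂ) (hz : z.im ≠ 0) (M : Matrix (Fin N) (Fin N) ℂ)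
    (hM : M.IsHermitian) : IsUnit (z • (1 : Matrix (Fin N) (Fin N) ℂ) - M) := by
  have h : z ∉ spectrum ℂ M := by
    rw [hM.spectrum_eq_image_range]
    rintro ⟨x, -, rfl⟩
    simp at hz
  rw [spectrum.notMem_iff, Algebra.algebraMap_eq_smul_one] at h
  exact h

lemma G_entry_le (N : ℕ) (z : ℂ) (hz : z.im ≠ 0) (M : Matrix (Fin N) (Fin N) ℂ)
    (hM : M.IsHermitian) (i j : Fin N) : ‖G N z M i j‖ ≤ 1 / |z.im| := by
  set A := z • (1 : Matrix (Fin N) (Fin N) ℂ) - M with hA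
  have hu := (Matrix.isUnit_iff_isUnit_det _).1 (isUnit_sub N z hz M hM)
  set g := G N z M with hg
  have hgA : g * A = 1 := Matrix.nonsing_inv_mul _ hu
  have hAg : A.conjTranspose * g.conjTranspose = 1 := by
    rw [← Matrix.conjTranspose_mul, hgA, Matrix.conjTranspose_one]
  have hAA : A.conjTranspose - A = (star z - z) • (1 : Matrix (Fin N) (Fin N) ℂ) := by
    rw [hA, Matrix.conjTranspose_sub, hM.eq, Matrix.conjTranspose_smul, Matrix.conjTranspose_one,
      sub_smul]
    abel
  have hW : g - g.conjTranspose = (star z - z) • (g * g.conjTranspose) := by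
    calc g - g.conjTranspose = g * (A.conjTranspose * g.conjTranspose) -
          (g * A) * g.conjTranspose := by rw [hgA, hAg, mul_one, one_mul]
      _ = g * (A.conjTranspose - A) * g.conjTranspose := by noncomm_ring
      _ = _ := by rw [hAA]; simp
  have hii := congrFun (congrFun hW i) i
  rw [Matrix.sub_apply, Matrix.smul_apply, Matrix.conjTranspose_apply, Matrix.mul_apply] at hii
  have hsum : ∑ k, g i k * g.conjTranspose k i = ((∑ k, ‖g i k‖ ^ 2 : ℝ) : ℂ) := by
    push_cast
    refine Finset.sum_congr rfl fun k _ => ?_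
    rw [Matrix.conjTranspose_apply]
    exact Complex.mul_conj' _
  rw [hsum] at hii
  have him := congrArg Complex.im hii
  rw [smul_eq_mul, Complex.im_mul_ofReal, Complex.sub_im, Complex.sub_im, Complex.star_def,
    Complex.conj_im, Complex.conj_im] at him
  set S := ∑ k, ‖g i k‖ ^ 2 with hS
  have him2 : (g i i).im = - z.im * S := by
    linarith
  have hpos : 0 < |z.im| := abs_pos.2 hz
  have hS0 : 0 ≤ S := by positivity
  have h1 : |z.im| * S ≤ ‖g i i‖ := by
    have := Complex.abs_im_le_norm (g i i)
    rw [him2, abs_mul, abs_neg, abs_of_nonneg hS0] at this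
    exact this
  have hle : ∀ k, ‖g i k‖ ^ 2 ≤ S := fun k =>
    Finset.single_le_sum (f := fun k => ‖g i k‖ ^ 2) (fun k _ => by positivity) (Finset.mem_univ k)
  have h2 : |z.im| * ‖g i i‖ ≤ 1 := by
    have a := hle i
    have b : |z.im| * ‖g i i‖ ^ 2 ≤ ‖g i i‖ := le_trans (by gcongr) h1
    rcases (norm_nonneg (g i i)).eq_or_lt with h | h
    · rw [← h]; simp
    · by_contra hc
      push Not at hc
      nlinarith
  have h3 : (|z.im| * ‖g i j‖) ^ 2 ≤ 1 := by
    calc (|z.im| * ‖g i j‖) ^ 2 = |z.im| * (|z.im| * ‖g i j‖ ^ 2) := by ring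
      _ ≤ |z.im| * (|z.im| * S) := by gcongr; exact hle j
      _ ≤ |z.im| * ‖g i i‖ := by gcongr
      _ ≤ 1 := h2
  rw [le_div_iff₀ hpos, mul_comm]
  exact (sq_le_one_iff₀ (by positivity)).1 h3

lemma niceM_G (N : ℕ) (z : ℂ) (hz : z.im ≠ 0) : NiceM N (fun e => G N z (herm N e)) := by
  intro i j
  refine ⟨?_, 1 / |z.im|, 0, by positivity, fun e => ?_⟩
  · have hc : Continuous fun e => G N z (herm N e) := by
      unfold G
      rw [continuous_iff_continuousAt]
      intro e
      have hu := isUnit_sub N z hz (herm N e) (herm_isHermitian N e)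
      have h1 : ContinuousAt (fun e => z • (1 : Matrix (Fin N) (Fin N) ℂ) - herm N e) e :=
        (continuous_const.sub (herm_continuous N)).continuousAt
      simp only [Matrix.nonsing_inv_eq_ringInverse]
      obtain ⟨u, hu⟩ := hu
      have h2 := NormedRing.inverse_continuousAt u
      rw [hu] at h2
      exact ContinuousAt.comp (f := fun e => z • (1 : Matrix (Fin N) (Fin N) ℂ) - herm N e) h2 h1
    exact hc.matrix_elem i j
  · simpa using G_entry_le N z hz _ (herm_isHermitian N e) i j

/-! ### Derivatives -/

lemma hasDerivAt_line (N : ℕ) (M H : Matrix (Fin N) (Fin N) ℂ) :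
    HasDerivAt (fun s : ℝ => M + s • H) H 0 := by
  have h := ((hasDerivAt_id (0 : ℝ)).smul_const H).const_add M
  rw [one_smul] at h
  exact h

lemma hasDerivAt_G (N : ℕ) (z : ℂ) (hz : z.im ≠ 0) (M H : Matrix (Fin N) (Fin N) ℂ)
    (hM : M.IsHermitian) :
    HasDerivAt (fun s : ℝ => G N z (M + s • H)) (G N z M * H * G N z M) 0 := by
  obtain ⟨u, hu⟩ := isUnit_sub N z hz M hM
  have h1 : HasDerivAt (fun s : ℝ => z • (1 : Matrix (Fin N) (Fin N) ℂ) - (M + s • H)) (-H) 0 := by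
    simpa using! (hasDerivAt_line N M H).const_sub (z • (1 : Matrix (Fin N) (Fin N) ℂ))
  have h2 := hasFDerivAt_ringInverse (𝕜 := ℝ) u
  have h3 : (u : Matrix (Fin N) (Fin N) ℂ) =
    z • (1 : Matrix (Fin N) (Fin N) ℂ) - (M + (0 : ℝ) • H) := by rw [hu]; simp
  have hG : ((u⁻¹ : (Matrix (Fin N) (Fin N) ℂ)ˣ) : Matrix (Fin N) (Fin N) ℂ) = G N z M := by
    rw [G, ← hu, Matrix.nonsing_inv_eq_ringInverse, Ring.inverse_unit]
  rw [h3] at h2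
  have h4 := h2.comp_hasDerivAt (0 : ℝ) h1
  simp only [G, Matrix.nonsing_inv_eq_ringInverse] at hG ⊢
  convert! h4 using 1
  simp [hG]

lemma hasDerivAt_pow (N : ℕ) (M H : Matrix (Fin N) (Fin N) ℂ) (k : ℕ) :
    ∃ D : Matrix (Fin N) (Fin N) ℂ, HasDerivAt (fun s : ℝ => (M + s • H) ^ k) D 0 ∧
      ∀ m : ℕ, Matrix.trace (D * M ^ m) = k * Matrix.trace (M ^ (k - 1 + m) * H) := by
  induction k with
  | zero => exact ⟨0, by
      simp only [pow_zero]
      exact hasDerivAt_const (0 : ℝ) (1 : Matrix (Fin N) (Fin N) ℂ),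
      by simp⟩
  | succ k ih =>
    obtain ⟨D, hD, hT⟩ := ih
    refine ⟨D * M + M ^ k * H, ?_, fun m => ?_⟩
    · have := hD.mul (hasDerivAt_line N M H)
      simp only [pow_succ]
      simpa using! this
    · rw [add_mul, Matrix.trace_add, mul_assoc, ← pow_succ', hT, Matrix.trace_mul_comm (M ^ k * H),
        ← mul_assoc, ← pow_add]
      rcases k with _ | k
      · simp
      · have e1 : k + 1 - 1 + (m + 1) = k + 1 + m := by omega
        have e2 : k + 1 + 1 - 1 + m = k + 1 + m := by omega
        rw [e1, e2, add_comm m]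
        push_cast
        ring

lemma hasDerivAt_trace {N : ℕ} {F : ℝ → Matrix (Fin N) (Fin N) ℂ} {D : Matrix (Fin N) (Fin N) ℂ}
    {s : ℝ} (h : HasDerivAt F D s) :
    HasDerivAt (fun s => Matrix.trace (F s)) (Matrix.trace D) s := by
  have := (LinearMap.toContinuousLinearMap
    (Matrix.traceLinearMap (Fin N) ℝ ℂ)).hasFDerivAt.comp_hasDerivAt s h
  exact this

lemma hasDerivAt_entry {N : ℕ} {F : ℝ → Matrix (Fin N) (Fin N) ℂ} {D : Matrix (Fin N) (Fin N) ℂ}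
    {s : ℝ} (h : HasDerivAt F D s) (i j : Fin N) :
    HasDerivAt (fun s => F s i j) (D i j) s := by
  have := (LinearMap.toContinuousLinearMap
    (Matrix.entryLinearMap ℝ ℂ i j)).hasFDerivAt.comp_hasDerivAt s h
  exact this

lemma hasDerivAt_trace_pow (N : ℕ) (M H : Matrix (Fin N) (Fin N) ℂ) (k : ℕ) :
    HasDerivAt (fun s : ℝ => Matrix.trace ((M + s • H) ^ k))
      (k * Matrix.trace (M ^ (k - 1) * H)) 0 := by
  obtain ⟨D, hD, hT⟩ := hasDerivAt_pow N M H k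
  have := hT 0
  rw [pow_zero, mul_one, add_zero] at this
  rw [← this]
  exact hasDerivAt_trace hD

lemma hasDerivAt_trace_Vt (v N : ℕ) (t : ℕ → ℝ) (M H : Matrix (Fin N) (Fin N) ℂ) :
    HasDerivAt (fun s : ℝ => Matrix.trace (VtM v N t (M + s • H)))
      (Matrix.trace (Vt'M v N t M * H)) 0 := by
  simp only [VtM, Vt'M, Matrix.trace_add, Matrix.trace_sum, Matrix.trace_smul, add_mul,
    Finset.sum_mul, Matrix.smul_mul, smul_eq_mul]
  refine HasDerivAt.add ?_ (HasDerivAt.fun_sum fun j _ => ?_)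
  · have := (hasDerivAt_trace_pow N M H 2).const_mul (2⁻¹ : ℂ)
    simpa using this
  · have := (hasDerivAt_trace_pow N M H j).const_mul (t j : ℂ)
    convert! this using 1
    ring

lemma Vt'M_isHermitian (v N : ℕ) (t : ℕ → ℝ) (M : Matrix (Fin N) (Fin N) ℂ)
    (hM : M.IsHermitian) : (Vt'M v N t M).IsHermitian := by
  unfold Vt'M
  rw [Matrix.IsHermitian, Matrix.conjTranspose_add, Matrix.conjTranspose_sum, hM.eq]
  congr 1
  refine Finset.sum_congr rfl fun j _ => ?_
  rw [Matrix.conjTranspose_smul, Matrix.conjTranspose_pow, hM.eq]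
  simp

lemma trace_mul_real (N : ℕ) (A B : Matrix (Fin N) (Fin N) ℂ) (hA : A.IsHermitian)
    (hB : B.IsHermitian) : (((Matrix.trace (A * B)).re : ℝ) : ℂ) = Matrix.trace (A * B) := by
  rw [← Complex.conj_eq_iff_re]
  have := Matrix.trace_conjTranspose (A * B)
  rw [Matrix.conjTranspose_mul, hA.eq, hB.eq, Matrix.trace_mul_comm] at this
  exact this.symm

lemma hasLineDerivAt_wt (v N : ℕ) (t : ℕ → ℝ) (e u : coords N) :
    HasLineDerivAt ℝ (fun e => (wt v N t e : ℂ))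
      (-(N : ℂ) * Matrix.trace (Vt'M v N t (herm N e) * herm N u) * (wt v N t e : ℂ)) e u := by
  unfold HasLineDerivAt wt
  simp only [herm_add_smul]
  have h1 := hasDerivAt_trace_Vt v N t (herm N e) (herm N u)
  have h2 := Complex.reCLM.hasFDerivAt.comp_hasDerivAt (0 : ℝ) h1
  have h3 := ((h2.const_mul (-(N : ℝ))).exp).ofReal_comp
  convert! h3 using 1
  rw [← trace_mul_real N _ _ (Vt'M_isHermitian v N t _ (herm_isHermitian N e))
    (herm_isHermitian N u)]
  simp
  ring

/-! ### Integration by parts -/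

lemma ibp_herm (v N : ℕ) (hv : 2 ≤ v) (hve : Even v)
    (t : ℕ → ℝ) (ht : 0 < t v) (hN : 1 ≤ N) (z : ℂ) (hz : z.im ≠ 0) (u : coords N) (i j : Fin N) :
    ∫ e : coords N, (G N z (herm N e) * herm N u * G N z (herm N e)) i j * (wt v N t e : ℂ) =
      N * ∫ e : coords N, G N z (herm N e) i j *
        Matrix.trace (Vt'M v N t (herm N e) * herm N u) * (wt v N t e : ℂ) := by
  have hG := niceM_G N z hz
  have hGG : NiceM N (fun e => G N z (herm N e) * herm N u * G N z (herm N e)) :=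
    (hG.mul (NiceM.const N _)).mul hG
  have hV : Nice N (fun e => Matrix.trace (Vt'M v N t (herm N e) * herm N u)) :=
    ((niceM_Vt' v N t).mul (NiceM.const N _)).trace
  have key := integral_bilinear_hasLineDerivAt_right_eq_neg_left_of_integrable
    (μ := (volume : Measure (coords N))) (v := u)
    (f := fun e => G N z (herm N e) i j)
    (f' := fun e => (G N z (herm N e) * herm N u * G N z (herm N e)) i j)
    (g := fun e => (wt v N t e : ℂ))
    (g' := fun e => -(N : ℂ) * Matrix.trace (Vt'M v N t (herm N e) * herm N u) * (wt v N t e : ℂ))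
    (B := ContinuousLinearMap.mul ℝ ℂ)
    (by simpa using (hGG i j).integrable hv hve ht hN)
    (by
      have := ((hG i j).mul ((Nice.const N (-(N : ℂ))).mul hV)).integrable hv hve ht hN
      simpa only [ContinuousLinearMap.mul_apply', mul_assoc] using this)
    (by simpa using (hG i j).integrable hv hve ht hN)
    (fun e _ => by
      unfold HasLineDerivAt
      simp only [herm_add_smul]
      exact hasDerivAt_entry (hasDerivAt_G N z hz _ _ (herm_isHermitian N e)) i j)
    (fun e _ => hasLineDerivAt_wt v N t e u)
  simp only [ContinuousLinearMap.mul_apply'] at key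
  rw [eq_neg_iff_add_eq_zero, add_comm, ← eq_neg_iff_add_eq_zero] at key
  rw [key, ← integral_neg, ← integral_const_mul]
  congr 1
  funext e
  ring

lemma ibp (v N : ℕ) (hv : 2 ≤ v) (hve : Even v)
    (t : ℕ → ℝ) (ht : 0 < t v) (hN : 1 ≤ N) (z : ℂ) (hz : z.im ≠ 0)
    (B : Matrix (Fin N) (Fin N) ℂ) (i j : Fin N) :
    ∫ e : coords N, (G N z (herm N e) * B * G N z (herm N e)) i j * (wt v N t e : ℂ) =
      N * ∫ e : coords N, G N z (herm N e) i j *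
        Matrix.trace (Vt'M v N t (herm N e) * B) * (wt v N t e : ℂ) := by
  have hG := niceM_G N z hz
  have hGG : ∀ C : Matrix (Fin N) (Fin N) ℂ, Integrable (fun e : coords N =>
      (G N z (herm N e) * C * G N z (herm N e) : Matrix (Fin N) (Fin N) ℂ) i j * (wt v N t e : ℂ)) := fun C =>
    (((hG.mul (NiceM.const N C)).mul hG) i j).integrable hv hve ht hN
  have hV : ∀ C : Matrix (Fin N) (Fin N) ℂ, Integrable (fun e : coords N => G N z (herm N e) i j *
      Matrix.trace (Vt'M v N t (herm N e) * C) * (wt v N t e : ℂ)) := fun C =>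
    ((hG i j).mul ((niceM_Vt' v N t).mul (NiceM.const N C)).trace).integrable hv hve ht hN
  obtain ⟨a, ha⟩ := exists_herm N (realPart B : Matrix (Fin N) (Fin N) ℂ) (realPart B).2
  obtain ⟨b, hb⟩ := exists_herm N (imaginaryPart B : Matrix (Fin N) (Fin N) ℂ) (imaginaryPart B).2
  have hB : B = herm N a + Complex.I • herm N b := by
    rw [ha, hb]
    exact (realPart_add_I_smul_imaginaryPart B).symm
  have h1 := ibp_herm v N hv hve t ht hN z hz a i j
  have h2 := ibp_herm v N hv hve t ht hN z hz b i j
  have e1 : ∀ e : coords N, (G N z (herm N e) * B * G N z (herm N e)) i j * (wt v N t e : ℂ) =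
      (G N z (herm N e) * herm N a * G N z (herm N e)) i j * (wt v N t e : ℂ) + Complex.I *
      ((G N z (herm N e) * herm N b * G N z (herm N e)) i j * (wt v N t e : ℂ)) := by
    intro e
    rw [hB]
    simp only [mul_add, add_mul, Matrix.mul_smul, Matrix.smul_mul, Matrix.add_apply,
      Matrix.smul_apply, smul_eq_mul]
    ring
  have e2 : ∀ e : coords N, G N z (herm N e) i j *
        Matrix.trace (Vt'M v N t (herm N e) * B) * (wt v N t e : ℂ) =
      G N z (herm N e) i j * Matrix.trace (Vt'M v N t (herm N e) * herm N a) * (wt v N t e : ℂ) +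
      Complex.I * (G N z (herm N e) i j *
        Matrix.trace (Vt'M v N t (herm N e) * herm N b) * (wt v N t e : ℂ)) := by
    intro e
    rw [hB]
    simp only [mul_add, Matrix.mul_smul, Matrix.trace_add, Matrix.trace_smul, smul_eq_mul]
    ring
  simp only [e1, e2]
  rw [integral_add (hGG _) ((hGG _).const_mul _), integral_add (hV _) ((hV _).const_mul _),
    integral_const_mul, integral_const_mul, h1, h2]
  ring

lemma main_integral (v N : ℕ) (hv : 2 ≤ v) (hve : Even v)
    (t : ℕ → ℝ) (ht : 0 < t v) (hN : 1 ≤ N) (z : ℂ) (hz : z.im ≠ 0) :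
    ∫ e : coords N, (Matrix.trace (G N z (herm N e))) ^ 2 * (wt v N t e : ℂ) =
      N * ∫ e : coords N, Matrix.trace (G N z (herm N e) * Vt'M v N t (herm N e)) *
        (wt v N t e : ℂ) := by
  have hG := niceM_G N z hz
  have hGG : ∀ (C : Matrix (Fin N) (Fin N) ℂ) (i j : Fin N), Integrable (fun e : coords N =>
      (G N z (herm N e) * C * G N z (herm N e) : Matrix (Fin N) (Fin N) ℂ) i j * (wt v N t e : ℂ)) := fun C i j =>
    (((hG.mul (NiceM.const N C)).mul hG) i j).integrable hv hve ht hN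
  have hV : ∀ (C : Matrix (Fin N) (Fin N) ℂ) (i j : Fin N), Integrable (fun e : coords N => G N z (herm N e) i j *
      Matrix.trace (Vt'M v N t (herm N e) * C) * (wt v N t e : ℂ)) := fun C i j =>
    ((hG i j).mul ((niceM_Vt' v N t).mul (NiceM.const N C)).trace).integrable hv hve ht hN
  have e1 : ∀ e : coords N, (Matrix.trace (G N z (herm N e))) ^ 2 * (wt v N t e : ℂ) =
      ∑ i, ∑ j, (G N z (herm N e) * Matrix.single i j 1 * G N z (herm N e) :
        Matrix (Fin N) (Fin N) ℂ) i j *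
        (wt v N t e : ℂ) := by
    intro e
    simp only [← Finset.sum_mul]
    congr 1
    rw [pow_two, Matrix.trace, Finset.sum_mul_sum]
    refine Finset.sum_congr rfl fun i _ => Finset.sum_congr rfl fun j _ => ?_
    rw [mul_assoc, Matrix.mul_apply, Finset.sum_eq_single i]
    · simp [Matrix.single_mul_apply_same]
    · intro k _ hk
      simp [Matrix.single_mul_apply_of_ne, hk]
    · simp
  have e2 : ∀ e : coords N, Matrix.trace (G N z (herm N e) * Vt'M v N t (herm N e)) *
        (wt v N t e : ℂ) = ∑ i, ∑ j, G N z (herm N e) i j *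
        Matrix.trace (Vt'M v N t (herm N e) * Matrix.single i j 1) * (wt v N t e : ℂ) := by
    intro e
    simp only [← Finset.sum_mul]
    congr 1
    rw [Matrix.trace]
    refine Finset.sum_congr rfl fun i _ => ?_
    rw [Matrix.diag_apply, Matrix.mul_apply]
    refine Finset.sum_congr rfl fun j _ => ?_
    simp [Matrix.trace_mul_single]
  simp only [e1, e2]
  rw [integral_finsetSum _ fun i _ => integrable_finsetSum _ fun j _ => hGG _ i j,
    integral_finsetSum _ fun i _ => integrable_finsetSum _ fun j _ => hV _ i j, Finset.mul_sum]
  refine Finset.sum_congr rfl fun i _ => ?_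
  rw [integral_finsetSum _ fun j _ => hGG _ i j, integral_finsetSum _ fun j _ => hV _ i j,
    Finset.mul_sum]
  exact Finset.sum_congr rfl fun j _ => ibp v N hv hve t ht hN z hz _ i j

end Aux

/-- For every `N ≥ 1` and every `z ∈ ℂ` with `Im z ≠ 0`,
`E((Tr G(z,M))²) = N ⬝ E(Tr (G(z,M) ⬝ V_t'(M)))`. -/
theorem expectation_trace_resolvent_identity (v N : ℕ) (hv : 2 ≤ v) (hve : Even v)
    (t : ℕ → ℝ) (ht : 0 < t v) (hN : 1 ≤ N) (z : ℂ) (hz : z.im ≠ 0) :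
    Em v N t (fun e => (Matrix.trace (G N z (herm N e))) ^ 2) =
      (N : ℂ) * Em v N t (fun e => Matrix.trace (G N z (herm N e) * Vt'M v N t (herm N e))) := by
  unfold Em
  rw [main_integral v N hv hve t ht hN z hz, mul_div_assoc]

end LoopEq
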